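/- The space of alternal rational-valued moulds M in the variables v_i such that Δ_v·M is polynomial-valued in every depth is closed under the ari bracket; i.e. it forms a Lie algebra under ari. -/

import Mathlib

/-- A mould over ℚ: its depth-r component is its restriction to lists of length r
(a function of r commuting variables, identified with the corresponding ℚ-valued function). -/
abbrev Mould := List ℚ → ℚ

/-- The concatenation product of moulds:
μ(A,B)(u₁,…,u_r) = Σ_{i=0}^r A(u₁,…,u_i)·B(u_{i+1},…,u_r). -/
def muM (A B : Mould) : Mould := fun w =>
  ∑ i ∈ Finset.range (w.length + 1), A (w.take i) * B (w.drop i)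

/-- lu(A,B) = μ(A,B) - μ(B,A). -/
def luM (A B : Mould) : Mould := fun w => muM A B w - muM B A w

/-- The list of all shuffles of two lists. -/
def shuffles : List ℚ → List ℚ → List (List ℚ)
  | [], ys => [ys]
  | x :: xs, [] => [x :: xs]
  | x :: xs, y :: ys =>
      ((shuffles xs (y :: ys)).map (x :: ·)) ++ ((shuffles (x :: xs) ys).map (y :: ·))

/-- Δ_v(v₁,…,v_r) = v₁(v₁-v₂)(v₂-v₃)⋯(v_{r-1}-v_r)v_r (equal to 1 in depth 0). -/
def deltaV (w : List ℚ) : ℚ :=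
  w.headD 1 * w.getLastD 1 * (List.zipWith (fun a b => a - b) w w.tail).prod

/-- A generic point: pairwise distinct, nonzero coordinates (so that Δ_v is nonzero at the
point and at all its permutations); identities of rational functions are equivalent to their
pointwise validity at such points. -/
def GoodV (w : List ℚ) : Prop := w.Nodup ∧ (0 : ℚ) ∉ w

/-- Evaluation of a family of polynomials (one in each depth) at a point, in the matching
depth: this encodes a polynomial-valued mould. -/
noncomputable def evalP (p : (r : ℕ) → MvPolynomial (Fin r) ℚ) (w : List ℚ) : ℚ :=
  MvPolynomial.aeval w.get (p w.length)

/-- arit(B)·A for moulds in the variables v_i: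
(arit(B)·A)(v₁,…,v_r) = Σ_{0≤k<ℓ<r} A(a c) B(b⌋) - Σ_{1≤k<ℓ≤r} A(a c) B(⌊b),
where a = (v₁,…,v_k), b = (v_{k+1},…,v_ℓ), c = (v_{ℓ+1},…,v_r),
b⌋ subtracts v_{ℓ+1} from every entry of b, and ⌊b subtracts v_k. -/
def aritV (B A : Mould) : Mould := fun w =>
  (∑ k ∈ Finset.range (w.length + 1), ∑ l ∈ Finset.range (w.length + 1),
    if k < l ∧ l < w.length then
      A (w.take k ++ w.drop l) * B (((w.take l).drop k).map (fun x => x - w.getD l 0))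
    else 0)
  - (∑ k ∈ Finset.range (w.length + 1), ∑ l ∈ Finset.range (w.length + 1),
    if 1 ≤ k ∧ k < l ∧ l ≤ w.length then
      A (w.take k ++ w.drop l) * B (((w.take l).drop k).map (fun x => x - w.getD (k - 1) 0))
    else 0)

/-- The ari bracket (v-variable version): ari(A,B) = arit(B)·A - arit(A)·B + lu(A,B). -/
def ariV (A B : Mould) : Mould := fun w => aritV B A w - aritV A B w + luM A B w

/-!
The bracket is the antisymmetrization of `preari(A,B) = arit(B)·A + μ(A,B)`.

Alternality. Writing each factorization in `arit(B)·A` around the letter by which `b` is translated,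
alternality of `B` makes `A ↦ arit(B)·A` compatible with shuffles, up to terms in which `b` is taken
entirely from one of the two shuffled words; those coming from the factors before and after the
marked letter are equal and cancel.

Denominators. Put `v₀ = v_{r+1} = 0`. Partial fractions write each term of `Δ_v·arit(B)·A` as a
difference of two fractions whose denominators are differences of two letters. The fractions combine
into divided differences of polynomials, except for the poles at `v_{k+1} = v_{l+1}`, where terms of
opposite flexions cancel provided the numerator `q` of `B` satisfies `q(0,v) = q(v,0)`, and except
for a boundary term that `μ(A,B)` makes symmetric in `A` and `B`. The identity `q(0,v) = q(v,0)` is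
the residue at `t = 0` of alternality for the shuffle of `v` with one letter `t`.
-/

/-! ### Shuffle sums and deconcatenation sums -/

/-- The value at the shuffle product of `u` and `v` of the linear extension of `f` to sums of
words. -/
def shuffleSum (f : Mould) (u v : List ℚ) : ℚ := ((shuffles u v).map f).sum

/-- The sum `∑ F a b` over all factorizations `w = a b`. -/
def deconcSum (F : List ℚ → List ℚ → ℚ) (w : List ℚ) : ℚ :=
  ∑ i ∈ Finset.range (w.length + 1), F (w.take i) (w.drop i)

/-- The sum `∑ F a x c` over all factorizations `w = a x c` with `x` a letter. -/
def letterSum (F : List ℚ → ℚ → List ℚ → ℚ) (w : List ℚ) : ℚ :=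
  ∑ i ∈ Finset.range w.length, F (w.take i) (w.getD i 0) (w.drop (i + 1))

theorem shuffleSum_nil_left (f : Mould) (v : List ℚ) : shuffleSum f [] v = f v := by
  simp [shuffleSum, shuffles]

theorem shuffleSum_nil_right (f : Mould) (u : List ℚ) : shuffleSum f u [] = f u := by
  cases u <;> simp [shuffleSum, shuffles]

theorem shuffleSum_cons_cons (f : Mould) (x y : ℚ) (u v : List ℚ) :
    shuffleSum f (x :: u) (y :: v) =
      shuffleSum (fun w => f (x :: w)) u (y :: v) +
        shuffleSum (fun w => f (y :: w)) (x :: u) v := by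
  simp [shuffleSum, shuffles, Function.comp_def]

theorem shuffleSum_comm (f : Mould) (u v : List ℚ) : shuffleSum f u v = shuffleSum f v u := by
  induction u generalizing f v with
  | nil => rw [shuffleSum_nil_left, shuffleSum_nil_right]
  | cons x u ihu =>
    induction v generalizing f with
    | nil => rw [shuffleSum_nil_left, shuffleSum_nil_right]
    | cons y v ihv => rw [shuffleSum_cons_cons, shuffleSum_cons_cons, ihu, ihv, add_comm]

theorem shuffleSum_add (f g : Mould) (u v : List ℚ) :
    shuffleSum (fun w => f w + g w) u v = shuffleSum f u v + shuffleSum g u v := by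
  simp [shuffleSum, List.sum_map_add]

theorem shuffleSum_mul_left (t : ℚ) (f : Mould) (u v : List ℚ) :
    shuffleSum (fun w => t * f w) u v = t * shuffleSum f u v := by
  simp [shuffleSum, List.sum_map_mul_left]

theorem shuffleSum_mul_right (t : ℚ) (f : Mould) (u v : List ℚ) :
    shuffleSum (fun w => f w * t) u v = shuffleSum f u v * t := by
  simp [shuffleSum, List.sum_map_mul_right]

theorem shuffleSum_sub (f g : Mould) (u v : List ℚ) :
    shuffleSum (fun w => f w - g w) u v = shuffleSum f u v - shuffleSum g u v := by
  rw [eq_sub_iff_add_eq, ← shuffleSum_add]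
  simp

theorem shuffleSum_deconcSum_comm (F : List ℚ → List ℚ → List ℚ → ℚ) (u v w : List ℚ) :
    shuffleSum (fun a => deconcSum (F a) w) u v =
      deconcSum (fun b c => shuffleSum (fun a => F a b c) u v) w := by
  simp only [shuffleSum, deconcSum]
  induction shuffles u v with
  | nil => simp
  | cons a l ih => simp [ih, Finset.sum_add_distrib]

theorem shuffleSum_map (f : Mould) (g : ℚ → ℚ) (u v : List ℚ) :
    shuffleSum (fun w => f (w.map g)) u v = shuffleSum f (u.map g) (v.map g) := by
  induction u generalizing f v with
  | nil => simp [shuffleSum_nil_left]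
  | cons x u ihu =>
    induction v generalizing f with
    | nil => simp [shuffleSum_nil_right]
    | cons y v ihv =>
      simp only [shuffleSum_cons_cons, List.map_cons]
      exact congrArg₂ _ (ihu (fun w => f (g x :: w)) (y :: v)) (ihv fun w => f (g y :: w))

theorem deconcSum_nil (F : List ℚ → List ℚ → ℚ) : deconcSum F [] = F [] [] := by
  simp [deconcSum]

theorem deconcSum_cons (F : List ℚ → List ℚ → ℚ) (x : ℚ) (w : List ℚ) :
    deconcSum F (x :: w) = F [] (x :: w) + deconcSum (fun a b => F (x :: a) b) w := by
  rw [deconcSum, List.length_cons, Finset.sum_range_succ', add_comm]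
  simp [deconcSum]

theorem deconcSum_add (F G : List ℚ → List ℚ → ℚ) (w : List ℚ) :
    deconcSum (fun a b => F a b + G a b) w = deconcSum F w + deconcSum G w :=
  Finset.sum_add_distrib

theorem deconcSum_sub (F G : List ℚ → List ℚ → ℚ) (w : List ℚ) :
    deconcSum (fun a b => F a b - G a b) w = deconcSum F w - deconcSum G w :=
  Finset.sum_sub_distrib _ _

theorem deconcSum_mul_left (t : ℚ) (F : List ℚ → List ℚ → ℚ) (w : List ℚ) :
    deconcSum (fun a b => t * F a b) w = t * deconcSum F w :=
  (Finset.mul_sum _ _ _).symm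

theorem deconcSum_mul_right (t : ℚ) (F : List ℚ → List ℚ → ℚ) (w : List ℚ) :
    deconcSum (fun a b => F a b * t) w = deconcSum F w * t :=
  (Finset.sum_mul _ _ _).symm

theorem deconcSum_zero (w : List ℚ) : deconcSum (fun _ _ => 0) w = 0 :=
  Finset.sum_const_zero

theorem deconcSum_comm (F : List ℚ → List ℚ → List ℚ → List ℚ → ℚ) (u v : List ℚ) :
    deconcSum (fun a b => deconcSum (F a b) v) u =
      deconcSum (fun c d => deconcSum (fun a b => F a b c d) u) v :=
  Finset.sum_comm

theorem deconcSum_assoc (F : List ℚ → List ℚ → List ℚ → ℚ) (w : List ℚ) :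
    deconcSum (fun r c => deconcSum (fun a b => F a b c) r) w =
      deconcSum (fun a r => deconcSum (F a) r) w := by
  induction w generalizing F with
  | nil => simp [deconcSum_nil]
  | cons x w ih => simp [deconcSum_nil, deconcSum_cons, deconcSum_add, ih, add_assoc]

theorem letterSum_nil (F : List ℚ → ℚ → List ℚ → ℚ) : letterSum F [] = 0 := by
  simp [letterSum]

theorem letterSum_cons (F : List ℚ → ℚ → List ℚ → ℚ) (x : ℚ) (w : List ℚ) :
    letterSum F (x :: w) = F [] x w + letterSum (fun a z c => F (x :: a) z c) w := by
  rw [letterSum, List.length_cons, Finset.sum_range_succ', add_comm]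
  simp [letterSum]

theorem letterSum_add (F G : List ℚ → ℚ → List ℚ → ℚ) (w : List ℚ) :
    letterSum (fun a x c => F a x c + G a x c) w = letterSum F w + letterSum G w :=
  Finset.sum_add_distrib

theorem letterSum_zero (w : List ℚ) : letterSum (fun _ _ _ => 0) w = 0 :=
  Finset.sum_const_zero

theorem shuffleSum_deconcSum (F : List ℚ → List ℚ → ℚ) (u v : List ℚ) :
    shuffleSum (deconcSum F) u v = deconcSum (fun u₁ u₂ => deconcSum (fun v₁ v₂ =>
      shuffleSum (fun a => shuffleSum (F a) u₂ v₂) u₁ v₁) v) u := by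
  induction u generalizing F v with
  | nil => simp [shuffleSum_nil_left, deconcSum_nil]
  | cons x u ihu =>
    induction v generalizing F with
    | nil => simp [shuffleSum_nil_right, deconcSum_nil]
    | cons y v ihv =>
      rw [shuffleSum_cons_cons]
      simp only [deconcSum_cons F, shuffleSum_add]
      rw [ihu, ihv]
      simp only [deconcSum_cons, shuffleSum_cons_cons, shuffleSum_nil_left, shuffleSum_nil_right,
        deconcSum_add]
      ring

/-- The sum of `F a x c` over the words `a x c` in the shuffle product of `u₁ x u₃` and `v`, where
`x` is the marked letter of the first factor. -/
def shuffleSumAt (F : List ℚ → ℚ → List ℚ → ℚ) (v u₁ : List ℚ) (x : ℚ) (u₃ : List ℚ) : ℚ :=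
  deconcSum (fun v₁ v₃ => shuffleSum (fun a => shuffleSum (F a x) u₃ v₃) u₁ v₁) v

theorem shuffleSumAt_sub (F G : List ℚ → ℚ → List ℚ → ℚ) (v u₁ : List ℚ) (x : ℚ) (u₃ : List ℚ) :
    shuffleSumAt (fun a y c => F a y c - G a y c) v u₁ x u₃ =
      shuffleSumAt F v u₁ x u₃ - shuffleSumAt G v u₁ x u₃ := by
  simp only [shuffleSumAt, shuffleSum_sub, deconcSum_sub]

theorem shuffleSumAt_nil (F : List ℚ → ℚ → List ℚ → ℚ) : shuffleSumAt F [] = F := by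
  ext u₁ x u₃
  simp [shuffleSumAt, deconcSum_nil, shuffleSum_nil_right]

theorem shuffleSumAt_cons_nil (F : List ℚ → ℚ → List ℚ → ℚ) (y : ℚ) (v : List ℚ) (x : ℚ)
    (u : List ℚ) :
    shuffleSumAt F (y :: v) [] x u =
      shuffleSum (F [] x) u (y :: v) + shuffleSumAt (fun a => F (y :: a)) v [] x u := by
  simp [shuffleSumAt, deconcSum_cons, shuffleSum_nil_left]

theorem shuffleSumAt_cons_cons (F : List ℚ → ℚ → List ℚ → ℚ) (y : ℚ) (v : List ℚ) (z : ℚ)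
    (u₁ : List ℚ) (x : ℚ) (u₃ : List ℚ) :
    shuffleSumAt F (y :: v) (z :: u₁) x u₃ =
      shuffleSumAt (fun a => F (z :: a)) (y :: v) u₁ x u₃ +
        shuffleSumAt (fun a => F (y :: a)) v (z :: u₁) x u₃ := by
  simp only [shuffleSumAt, deconcSum_cons, shuffleSum_cons_cons, shuffleSum_nil_right,
    deconcSum_add]
  ring

theorem shuffleSum_append_cons (f : Mould) (x : ℚ) (u₁ u₃ v : List ℚ) :
    shuffleSum f (u₁ ++ x :: u₃) v = shuffleSumAt (fun a y c => f (a ++ y :: c)) v u₁ x u₃ := by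
  induction u₁ generalizing f v with
  | nil =>
    induction v generalizing f with
    | nil => simp [shuffleSum_nil_right, shuffleSumAt_nil]
    | cons y v ihv =>
      simpa [shuffleSum_cons_cons, shuffleSumAt_cons_nil] using ihv fun w => f (y :: w)
  | cons z u ihu =>
    induction v generalizing f with
    | nil => simp [shuffleSum_nil_right, shuffleSumAt_nil]
    | cons y v ihv =>
      rw [List.cons_append, shuffleSum_cons_cons, ihu, ← List.cons_append, ihv,
        shuffleSumAt_cons_cons]
      simp only [List.cons_append]

theorem shuffleSum_singleton_left (f : Mould) (x : ℚ) (v : List ℚ) :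
    shuffleSum f [x] v = deconcSum (fun a b => f (a ++ x :: b)) v := by
  simpa [shuffleSumAt, shuffleSum_nil_left] using shuffleSum_append_cons f x [] [] v

theorem shuffleSum_letterSum (F : List ℚ → ℚ → List ℚ → ℚ) (u v : List ℚ) :
    shuffleSum (letterSum F) u v =
      letterSum (shuffleSumAt F v) u + letterSum (shuffleSumAt F u) v := by
  induction u generalizing F v with
  | nil => simp [shuffleSum_nil_left, shuffleSumAt_nil, letterSum_nil]
  | cons x u ihu =>
    induction v generalizing F with
    | nil => simp [shuffleSum_nil_right, shuffleSumAt_nil, letterSum_nil]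
    | cons y v ihv =>
      rw [shuffleSum_cons_cons]
      simp only [letterSum_cons F, shuffleSum_add]
      rw [ihu, ihv]
      simp only [letterSum_cons, shuffleSumAt_cons_nil, shuffleSumAt_cons_cons, letterSum_add,
        shuffleSum_comm (F [] y)]
      ring

theorem deconcSum_eq_add_sum_Ico (F : List ℚ → List ℚ → ℚ) {w : List ℚ} (hw : w ≠ []) :
    deconcSum F w = F [] w + F w [] +
      ∑ i ∈ Finset.Ico 1 w.length, F (w.take i) (w.drop i) := by
  have hpos := List.length_pos_iff.2 hw
  rw [deconcSum, Finset.sum_range_succ, Finset.range_eq_Ico, Finset.sum_eq_sum_Ico_succ_bot hpos]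
  simp only [List.take_zero, List.drop_zero, List.take_length, List.drop_length]
  ring

/-! ### Alternal moulds -/

/-- The counit of deconcatenation: `1` at the empty word and `0` elsewhere. -/
def counit : Mould
  | [] => 1
  | _ :: _ => 0

theorem counit_of_ne_nil {w : List ℚ} (hw : w ≠ []) : counit w = 0 := by
  cases w <;> simp_all [counit]

theorem deconcSum_counit_mul_left (F : List ℚ → List ℚ → ℚ) (w : List ℚ) :
    deconcSum (fun a b => counit a * F a b) w = F [] w := by
  cases w with
  | nil => simp [deconcSum_nil, counit]
  | cons x w => simp [deconcSum_cons, counit, deconcSum_zero]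

theorem deconcSum_counit_mul_right (F : List ℚ → List ℚ → ℚ) (w : List ℚ) :
    deconcSum (fun a b => counit b * F a b) w = F w [] := by
  induction w generalizing F with
  | nil => simp [deconcSum_nil, counit]
  | cons x w ih => rw [deconcSum_cons, ih fun a b => F (x :: a) b]; simp [counit]

/-- A mould is alternal if it vanishes at the shuffle product of any two nonempty words. -/
def Alternal (A : Mould) : Prop :=
  ∀ u v : List ℚ, u ≠ [] → v ≠ [] → shuffleSum A u v = 0

namespace Alternal

variable {A B : Mould}

theorem sub (hA : Alternal A) (hB : Alternal B) : Alternal fun w => A w - B w := fun u v hu hv => by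
  rw [shuffleSum_sub, hA u v hu hv, hB u v hu hv, sub_zero]

theorem add (hA : Alternal A) (hB : Alternal B) : Alternal fun w => A w + B w := fun u v hu hv => by
  rw [shuffleSum_add, hA u v hu hv, hB u v hu hv, add_zero]

theorem comp_map (hA : Alternal A) (g : ℚ → ℚ) : Alternal fun w => A (w.map g) := fun u v hu hv =>
  (shuffleSum_map A g u v).trans (hA _ _ (by simpa using hu) (by simpa using hv))

theorem shuffleSum_eq (hB : Alternal B) (hB0 : B [] = 0) (u v : List ℚ) :
    shuffleSum B u v = counit v * B u + counit u * B v := by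
  rcases eq_or_ne u [] with rfl | hu
  · cases v <;> simp [shuffleSum_nil_left, counit, hB0]
  rcases eq_or_ne v [] with rfl | hv
  · simp [shuffleSum_nil_right, counit, hB0]
  · simp [hB u v hu hv, counit_of_ne_nil hu, counit_of_ne_nil hv]

theorem shuffleSum_deconcSum_mul_prefix (hB : Alternal B) (hB0 : B [] = 0) (F : Mould)
    (u v : List ℚ) :
    shuffleSum (deconcSum fun b c => F c * B b) u v =
      deconcSum (fun b c => shuffleSum F c v * B b) u +
        deconcSum (fun b c => shuffleSum F u c * B b) v := by
  simp only [shuffleSum_deconcSum, shuffleSum_mul_left, shuffleSum_mul_right, hB.shuffleSum_eq hB0,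
    mul_add, mul_left_comm _ (counit _), deconcSum_add, deconcSum_mul_left,
    deconcSum_counit_mul_left]

theorem shuffleSum_deconcSum_mul_suffix (hB : Alternal B) (hB0 : B [] = 0) (F : Mould)
    (u v : List ℚ) :
    shuffleSum (deconcSum fun a b => F a * B b) u v =
      deconcSum (fun a b => shuffleSum F a v * B b) u +
        deconcSum (fun a b => shuffleSum F u a * B b) v := by
  simp only [shuffleSum_deconcSum, shuffleSum_mul_left, hB.shuffleSum_eq hB0,
    mul_add, mul_left_comm _ (counit _), shuffleSum_add, deconcSum_add, deconcSum_mul_left,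
    deconcSum_counit_mul_right, shuffleSum_mul_right]

theorem shuffleSum_muM (hA : Alternal A) (hB : Alternal B) (hA0 : A [] = 0) (hB0 : B [] = 0)
    {u v : List ℚ} (hu : u ≠ []) (hv : v ≠ []) :
    shuffleSum (muM A B) u v = A u * B v + A v * B u := by
  have muM_eq : muM A B = deconcSum fun a b => A a * B b := rfl
  simp only [muM_eq, hB.shuffleSum_deconcSum_mul_suffix hB0, hA.shuffleSum_eq hA0,
    counit_of_ne_nil hu, counit_of_ne_nil hv, zero_mul, zero_add, add_zero, mul_assoc,
    deconcSum_counit_mul_left]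
  ring

theorem luM (hA : Alternal A) (hB : Alternal B) (hA0 : A [] = 0) (hB0 : B [] = 0) :
    Alternal (luM A B) := fun u v hu hv => by
  have luM_eq : _root_.luM A B = fun w => muM A B w - muM B A w := rfl
  rw [luM_eq, shuffleSum_sub, hA.shuffleSum_muM hB hA0 hB0 hu hv,
    hB.shuffleSum_muM hA hB0 hA0 hu hv]
  ring

end Alternal

/-- The part of `arit(B)·A` at the word `a x c` in which the removed factor is translated by the
letter `x`. -/
def aritAt (B A : Mould) (a : List ℚ) (x : ℚ) (c : List ℚ) : ℚ :=
  deconcSum (fun a' b => A (a' ++ x :: c) * B (b.map (· - x))) a -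
    deconcSum (fun b c' => A (a ++ x :: c') * B (b.map (· - x))) c

theorem shuffleSumAt_deconcSum_mul_suffix (F : List ℚ → ℚ → List ℚ → ℚ) {x : ℚ} {B : Mould}
    (hB : Alternal B) (hB0 : B [] = 0) (v u₁ u₃ : List ℚ) :
    shuffleSumAt (fun a y c => deconcSum (fun a' b => F a' y c * B b) a) v u₁ x u₃ =
      deconcSum (fun a' b => shuffleSumAt F v a' x u₃ * B b) u₁ +
        deconcSum (fun v₁ v' => deconcSum (fun b v₃ =>
          shuffleSum (fun a => shuffleSum (F a x) u₃ v₃) u₁ v₁ * B b) v') v := by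
  have expand (v₁ v₃) := hB.shuffleSum_deconcSum_mul_suffix hB0
    (fun a => shuffleSum (F a x) u₃ v₃) u₁ v₁
  simp only [shuffleSumAt, shuffleSum_deconcSum_comm, shuffleSum_mul_right, expand, deconcSum_add,
    deconcSum_mul_right, deconcSum_comm _ v u₁, deconcSum_assoc]

theorem shuffleSumAt_deconcSum_mul_prefix (F : List ℚ → ℚ → List ℚ → ℚ) {x : ℚ} {B : Mould}
    (hB : Alternal B) (hB0 : B [] = 0) (v u₁ u₃ : List ℚ) :
    shuffleSumAt (fun a y c => deconcSum (fun b c' => F a y c' * B b) c) v u₁ x u₃ =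
      deconcSum (fun b c' => shuffleSumAt F v u₁ x c' * B b) u₃ +
        deconcSum (fun v₁ v' => deconcSum (fun b v₃ =>
          shuffleSum (fun a => shuffleSum (F a x) u₃ v₃) u₁ v₁ * B b) v') v := by
  simp only [shuffleSumAt, hB.shuffleSum_deconcSum_mul_prefix hB0, shuffleSum_add,
    shuffleSum_deconcSum_comm, shuffleSum_mul_right, deconcSum_add, deconcSum_mul_right,
    deconcSum_comm _ v u₃]

theorem Alternal.shuffleSumAt_aritAt {A B : Mould} (hA : Alternal A) (hB : Alternal B)
    (hB0 : B [] = 0) {v : List ℚ} (hv : v ≠ []) (u₁ : List ℚ) (x : ℚ) (u₃ : List ℚ) :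
    shuffleSumAt (aritAt B A) v u₁ x u₃ = 0 := by
  have hBx : Alternal fun b => B (b.map (· - x)) := hB.comp_map _
  have hA_at (u₁ u₃) : shuffleSumAt (fun a y c => A (a ++ y :: c)) v u₁ x u₃ = 0 :=
    (shuffleSum_append_cons A x u₁ u₃ v).symm.trans (hA _ _ (by simp) hv)
  have before := shuffleSumAt_deconcSum_mul_suffix (fun a y c => A (a ++ y :: c)) (x := x) hBx hB0
    v u₁ u₃
  have after := shuffleSumAt_deconcSum_mul_prefix (fun a y c => A (a ++ y :: c)) (x := x) hBx hB0
    v u₁ u₃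
  simp only [hA_at, zero_mul, deconcSum_zero, zero_add] at before after
  exact (shuffleSumAt_sub _ _ v u₁ x u₃).trans (sub_eq_zero.2 (before.trans after.symm))

theorem Alternal.letterSum_aritAt {A B : Mould} (hA : Alternal A) (hB : Alternal B)
    (hB0 : B [] = 0) : Alternal (letterSum (aritAt B A)) := fun u v hu hv => by
  have vanish {v : List ℚ} (hv : v ≠ []) : shuffleSumAt (aritAt B A) v = fun _ _ _ => 0 := by
    ext u₁ x u₃
    exact hA.shuffleSumAt_aritAt hB hB0 hv u₁ x u₃
  rw [shuffleSum_letterSum, vanish hu, vanish hv, letterSum_zero, letterSum_zero, add_zero]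

/-! ### Words with a removed factor -/

section Words

variable {S : Type*}

/-- The `i`-th letter of a word, counted from `1`, with the convention `v₀ = v_{r+1} = 0`. -/
def letter [Zero S] (w : List S) (i : ℕ) : S := (0 :: w).getD i 0

/-- The word `a c` of a factorization `w = a b c` with `b = (v_{k+1},…,v_l)`. -/
def remove (w : List S) (k l : ℕ) : List S := w.take k ++ w.drop l

/-- The factor `(v_{k+1},…,v_l)` of a word, translated by `-x`. -/
def factorSub [Sub S] (w : List S) (k l : ℕ) (x : S) : List S :=
  ((w.take l).drop k).map (· - x)

theorem letter_zero [Zero S] (w : List S) : letter w 0 = 0 := rfl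

theorem letter_succ [Zero S] (w : List S) (i : ℕ) : letter w (i + 1) = w.getD i 0 := rfl

theorem letter_length_succ [Zero S] (w : List S) : letter w (w.length + 1) = 0 := by
  simp [letter_succ]

theorem letter_eq_zero_or_getElem [Zero S] (w : List S) (j : ℕ) :
    letter w j = 0 ∨ ∃ i, ∃ hi : i < w.length, j = i + 1 ∧ letter w j = w[i] := by
  rcases j with _ | i
  · exact Or.inl rfl
  rcases Nat.lt_or_ge i w.length with hi | hi
  · exact Or.inr ⟨i, hi, rfl, List.getD_eq_getElem _ _ hi⟩
  · exact Or.inl ((letter_succ w i).trans (List.getD_eq_default _ _ hi))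

theorem take_succ_eq_append_letter [Zero S] {w : List S} {k : ℕ} (hk : k < w.length) :
    w.take (k + 1) = w.take k ++ [letter w (k + 1)] := by
  rw [letter_succ, List.getD_eq_getElem _ _ hk, List.take_concat_get' _ _ hk]

theorem drop_eq_letter_cons [Zero S] {w : List S} {l : ℕ} (hl : l < w.length) :
    w.drop l = letter w (l + 1) :: w.drop (l + 1) := by
  rw [letter_succ, List.getD_eq_getElem _ _ hl, List.drop_eq_getElem_cons hl]

end Words

theorem sum_range_ite_lt (f : ℕ → ℚ) {l n : ℕ} (hl : l ≤ n) :
    (∑ k ∈ Finset.range n, if k < l then f k else 0) = ∑ k ∈ Finset.range l, f k := by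
  rw [← Finset.sum_filter]
  congr 1
  ext k
  simp only [Finset.mem_filter, Finset.mem_range]
  omega

theorem aritV_eq_sum (B A : Mould) (w : List ℚ) :
    aritV B A w = ∑ l ∈ Finset.range w.length, ∑ k ∈ Finset.range l,
      (A (remove w k l) * B (factorSub w k l (letter w (l + 1))) -
        A (remove w (k + 1) (l + 1)) * B (factorSub w (k + 1) (l + 1) (letter w (k + 1)))) := by
  simp only [Finset.sum_sub_distrib, aritV]
  congr 1
  · rw [Finset.sum_comm, Finset.sum_range_succ]
    simp only [lt_irrefl, and_false, if_false, Finset.sum_const_zero, add_zero]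
    refine Finset.sum_congr rfl fun l hl => ?_
    have hl := Finset.mem_range.1 hl
    simp only [hl, and_true]
    exact sum_range_ite_lt _ (by omega)
  · rw [Finset.sum_comm, Finset.sum_range_succ']
    simp only [Finset.sum_range_succ' _ w.length, Nat.not_lt_zero, false_and, and_false, if_false,
      Finset.sum_const_zero, add_zero, Nat.le_add_left, true_and, Nat.add_lt_add_iff_right,
      Nat.one_ne_zero, Nat.le_zero_eq]
    refine Finset.sum_congr rfl fun l hl => ?_
    have hl : l + 1 ≤ w.length := Finset.mem_range.1 hl
    simp only [hl, and_true]
    exact sum_range_ite_lt _ (by omega)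

theorem aritV_eq_letterSum {B : Mould} (hB0 : B [] = 0) (A : Mould) :
    aritV B A = letterSum (aritAt B A) := by
  ext w
  simp only [aritV_eq_sum, letterSum, aritAt, Finset.sum_sub_distrib]
  congr 1
  · refine Finset.sum_congr rfl fun l hl => ?_
    have hl := Finset.mem_range.1 hl
    rw [deconcSum, List.length_take, min_eq_left hl.le, Finset.sum_range_succ]
    simp only [List.drop_take_self, List.map_nil, hB0, mul_zero, add_zero]
    refine Finset.sum_congr rfl fun k hk => ?_
    have hk := Finset.mem_range.1 hk
    rw [List.take_take, min_eq_left hk.le, ← letter_succ, ← drop_eq_letter_cons hl]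
    rfl
  · rw [Finset.sum_comm' (t' := Finset.range w.length) (s' := fun k => Finset.Ico (k + 1) w.length)
      (by simp only [Finset.mem_range, Finset.mem_Ico]; omega)]
    refine Finset.sum_congr rfl fun k hk => ?_
    have hk := Finset.mem_range.1 hk
    rw [Finset.sum_Ico_eq_sum_range, deconcSum, List.length_drop, Finset.sum_range_succ']
    simp only [List.take_zero, List.map_nil, hB0, mul_zero, add_zero]
    refine Finset.sum_congr rfl fun j _ => ?_
    rw [remove, factorSub, take_succ_eq_append_letter hk, List.drop_drop, List.drop_take]
    simp only [letter_succ, List.append_assoc, List.singleton_append]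
    congr 4
    omega

theorem Alternal.aritV {A B : Mould} (hA : Alternal A) (hB : Alternal B) (hB0 : B [] = 0) :
    Alternal (aritV B A) :=
  aritV_eq_letterSum hB0 A ▸ hA.letterSum_aritAt hB hB0

theorem Alternal.ariV {A B : Mould} (hA : Alternal A) (hB : Alternal B)
    (hA0 : A [] = 0) (hB0 : B [] = 0) : Alternal (ariV A B) :=
  ((hA.aritV hB hB0).sub (hB.aritV hA hA0)).add (hA.luM hB hA0 hB0)

/-! ### Moulds at generic points -/

theorem GoodV.of_sublist {w w' : List ℚ} (hw : GoodV w) (h : w'.Sublist w) : GoodV w' :=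
  ⟨hw.1.sublist h, fun h0 => hw.2 (h.subset h0)⟩

theorem GoodV.of_perm {w w' : List ℚ} (hw : GoodV w) (h : w.Perm w') : GoodV w' :=
  ⟨h.nodup hw.1, fun h0 => hw.2 (h.mem_iff.2 h0)⟩

theorem GoodV.map_sub {b : List ℚ} (hb : b.Nodup) {x : ℚ} (hx : x ∉ b) : GoodV (b.map (· - x)) :=
  ⟨hb.map sub_left_injective, by simpa [sub_eq_zero] using hx⟩

theorem GoodV.remove {w : List ℚ} (hw : GoodV w) {k l : ℕ} (hkl : k ≤ l) :
    GoodV (remove w k l) := by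
  refine hw.of_sublist ?_
  conv_rhs => rw [← List.take_append_drop k w]
  exact (List.Sublist.refl _).append (List.drop_sublist_drop_left w hkl)

theorem GoodV.factorSub {w : List ℚ} (hw : GoodV w) {k l j : ℕ} (h : j ≤ k ∨ l < j) :
    GoodV (factorSub w k l (letter w j)) := by
  have sub : ((w.take l).drop k).Sublist w := (List.drop_sublist k _).trans (List.take_sublist l w)
  refine GoodV.map_sub (hw.1.sublist sub) fun hmem => ?_
  rcases letter_eq_zero_or_getElem w j with h0 | ⟨i, hi, rfl, hij⟩
  · exact hw.2 (h0 ▸ sub.subset hmem)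
  · obtain ⟨m, hm, h_eq⟩ := List.mem_iff_getElem.1 (hij ▸ hmem)
    rw [List.getElem_drop, List.getElem_take, hw.1.getElem_inj_iff] at h_eq
    simp only [List.length_drop, List.length_take] at hm
    omega

theorem perm_append_of_mem_shuffles {u v w : List ℚ} (h : w ∈ shuffles u v) :
    w.Perm (u ++ v) := by
  induction u generalizing v w with
  | nil => simp_all [shuffles]
  | cons x u ihu =>
    induction v generalizing w with
    | nil => simp_all [shuffles]
    | cons y v ihv =>
      simp only [shuffles, List.mem_append, List.mem_map] at h
      obtain ⟨w, hw, rfl⟩ | ⟨w, hw, rfl⟩ := h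
      · exact (ihu hw).cons x
      · exact ((ihv hw).cons y).trans List.perm_middle.symm

theorem shuffleSum_congr_good {f g : Mould} (hfg : ∀ w, GoodV w → f w = g w) {u v : List ℚ}
    (huv : GoodV (u ++ v)) : shuffleSum f u v = shuffleSum g u v := by
  rw [shuffleSum, List.map_congr_left fun w hw =>
    hfg w (huv.of_perm (perm_append_of_mem_shuffles hw).symm), shuffleSum]

open Classical in
/-- The mould agreeing with `A` at generic points and vanishing elsewhere, through which identities
between rational functions become identities at every word. -/
noncomputable def genericPart (A : Mould) : Mould := fun w => if GoodV w then A w else 0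

theorem genericPart_of_good (A : Mould) {w : List ℚ} (hw : GoodV w) : genericPart A w = A w :=
  if_pos hw

theorem genericPart_nil (A : Mould) : genericPart A [] = A [] :=
  genericPart_of_good A ⟨List.nodup_nil, List.not_mem_nil⟩

theorem alternal_genericPart {A : Mould} (hA : ∀ u v : List ℚ, u ≠ [] → v ≠ [] →
    GoodV (u ++ v) → shuffleSum A u v = 0) : Alternal (genericPart A) := by
  intro u v hu hv
  by_cases huv : GoodV (u ++ v)
  · rw [shuffleSum_congr_good (fun w hw => genericPart_of_good A hw) huv, hA u v hu hv huv]
  · refine List.sum_eq_zero (List.forall_mem_map.2 fun w hw => if_neg fun hgood => huv ?_)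
    exact hgood.of_perm (perm_append_of_mem_shuffles hw)

theorem aritV_genericPart (B A : Mould) {w : List ℚ} (hw : GoodV w) :
    aritV (genericPart B) (genericPart A) w = aritV B A w := by
  simp only [aritV_eq_sum]
  refine Finset.sum_congr rfl fun l _ => Finset.sum_congr rfl fun k hk => ?_
  have hkl := (Finset.mem_range.1 hk).le
  rw [genericPart_of_good A (hw.remove hkl), genericPart_of_good A (hw.remove (by omega)),
    genericPart_of_good B (hw.factorSub (by omega)),
    genericPart_of_good B (hw.factorSub (by omega))]

theorem muM_genericPart (A B : Mould) {w : List ℚ} (hw : GoodV w) :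
    muM (genericPart A) (genericPart B) w = muM A B w :=
  Finset.sum_congr rfl fun i _ => by
    rw [genericPart_of_good A (hw.of_sublist (List.take_sublist i w)),
      genericPart_of_good B (hw.of_sublist (List.drop_sublist i w))]

theorem ariV_genericPart (A B : Mould) {w : List ℚ} (hw : GoodV w) :
    ariV (genericPart A) (genericPart B) w = ariV A B w := by
  simp only [ariV, luM, aritV_genericPart _ _ hw, muM_genericPart _ _ hw]

/-! ### Polynomials at words -/

section PolyEval

variable {S T : Type*} [CommRing S] [Algebra ℚ S] [CommRing T] [Algebra ℚ T]

/-- The value of a family of polynomials, one in each depth, at a word over a commutative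
`ℚ`-algebra; `evalP` is the case of rational letters. -/
noncomputable def polyEval (p : (r : ℕ) → MvPolynomial (Fin r) ℚ) (w : List S) : S :=
  MvPolynomial.aeval w.get (p w.length)

/-- Evaluation of polynomials in `r` variables at the first `r` letters of a word, padded by
zeros. -/
noncomputable def evalWord (r : ℕ) (w : List S) : MvPolynomial (Fin r) ℚ →ₐ[ℚ] S :=
  MvPolynomial.aeval fun i => w.getD i 0

/-- The word whose letters are the variables of the polynomial ring. -/
noncomputable def genericWord (r : ℕ) : List (MvPolynomial (Fin r) ℚ) :=
  List.ofFn MvPolynomial.X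

theorem polyEval_eq_evalWord (p : (r : ℕ) → MvPolynomial (Fin r) ℚ) {w : List S} {r : ℕ}
    (hw : w.length = r) : polyEval p w = evalWord r w (p r) := by
  subst hw
  rw [polyEval, evalWord]
  congr 2
  ext i
  simp

theorem map_polyEval (φ : S →ₐ[ℚ] T) (p : (r : ℕ) → MvPolynomial (Fin r) ℚ) (w : List S) :
    φ (polyEval p w) = polyEval p (w.map φ) := by
  rw [polyEval_eq_evalWord p (w.length_map φ), evalWord, polyEval, MvPolynomial.comp_aeval_apply]
  congr 2
  ext i
  simp

theorem length_genericWord (r : ℕ) : (genericWord r).length = r := by simp [genericWord]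

theorem map_genericWord {w : List S} {r : ℕ} (hw : w.length = r) :
    (genericWord r).map (evalWord r w) = w := by
  subst hw
  apply List.ext_getElem <;> simp [genericWord, evalWord]

end PolyEval

theorem exists_ne_zero_forall_good (r : ℕ) : ∃ D : MvPolynomial (Fin r) ℚ, D ≠ 0 ∧
    ∀ w : List ℚ, w.length = r → evalWord r w D ≠ 0 → GoodV w := by
  refine ⟨(∏ i, MvPolynomial.X i) * (Matrix.vandermonde MvPolynomial.X).det,
    mul_ne_zero (Finset.prod_ne_zero_iff.2 fun i _ => MvPolynomial.X_ne_zero i)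
      (Matrix.det_vandermonde_ne_zero_iff.2 MvPolynomial.X_injective), ?_⟩
  rintro w rfl hD
  have map_vandermonde :
      (evalWord w.length w).mapMatrix (Matrix.vandermonde MvPolynomial.X) =
        Matrix.vandermonde w.get := by
    ext i j
    simp [Matrix.vandermonde, evalWord]
  rw [map_mul, AlgHom.map_det, map_vandermonde, map_prod] at hD
  obtain ⟨letters_ne_zero, det_ne_zero⟩ := mul_ne_zero_iff.1 hD
  refine ⟨List.nodup_iff_injective_get.2 (Matrix.det_vandermonde_ne_zero_iff.1 det_ne_zero),
    fun h0 => ?_⟩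
  obtain ⟨i, hi⟩ := List.mem_iff_get.1 h0
  refine Finset.prod_ne_zero_iff.1 letters_ne_zero i (Finset.mem_univ i) ?_
  simpa [evalWord] using hi

theorem eq_of_forall_good_evalWord_eq {r : ℕ} {P Q : MvPolynomial (Fin r) ℚ}
    (h : ∀ w : List ℚ, w.length = r → GoodV w → evalWord r w P = evalWord r w Q) : P = Q := by
  obtain ⟨D, hD, good_of_ne_zero⟩ := exists_ne_zero_forall_good r
  refine mul_left_cancel₀ hD (MvPolynomial.funext fun x => ?_)
  have eval_eq (P : MvPolynomial (Fin r) ℚ) :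
      MvPolynomial.eval x P = evalWord r (List.ofFn x) P := by
    rw [evalWord, MvPolynomial.aeval_eq_eval]
    congr 2
    ext i
    simp
  rw [map_mul, map_mul]
  by_cases hx : MvPolynomial.eval x D = 0
  · rw [hx, zero_mul, zero_mul]
  · rw [eval_eq] at hx
    rw [eval_eq P, eval_eq Q, h _ List.length_ofFn (good_of_ne_zero _ List.length_ofFn hx)]

/-! ### Denominators -/

/-- The product `(v₁ - v₂)(v₂ - v₃)⋯(v_{r-1} - v_r)`. -/
def diffProd (w : List ℚ) : ℚ := (List.zipWith (fun a b => a - b) w w.tail).prod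

theorem diffProd_singleton (x : ℚ) : diffProd [x] = 1 := by simp [diffProd]

theorem diffProd_cons_cons (x y : ℚ) (w : List ℚ) :
    diffProd (x :: y :: w) = (x - y) * diffProd (y :: w) := by
  simp [diffProd]

theorem diffProd_append {u v : List ℚ} (hu : u ≠ []) (hv : v ≠ []) :
    diffProd (u ++ v) = diffProd u * (u.getLastD 0 - v.headD 0) * diffProd v := by
  obtain ⟨y, v, rfl⟩ := List.exists_cons_of_ne_nil hv
  induction u with
  | nil => exact absurd rfl hu
  | cons x u ih =>
    cases u with
    | nil => simp [diffProd]
    | cons z u =>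
      have ih := ih (List.cons_ne_nil z u)
      simp only [List.cons_append] at ih ⊢
      rw [diffProd_cons_cons, ih, diffProd_cons_cons]
      simp only [List.getLastD_cons]
      ring

theorem diffProd_append_cons (u : List ℚ) (t : ℚ) (v : List ℚ) :
    diffProd (u ++ t :: v) = diffProd (u ++ [t]) * diffProd (t :: v) := by
  rcases eq_or_ne u [] with rfl | hu
  · simp [diffProd]
  · rw [diffProd_append hu (List.cons_ne_nil t v), diffProd_append hu (List.cons_ne_nil t [])]
    simp [diffProd]

theorem diffProd_map_sub (t : ℚ) (w : List ℚ) : diffProd (w.map (· - t)) = diffProd w := by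
  simp [diffProd, ← List.map_tail, List.zipWith_map]

theorem deltaV_eq_mul_diffProd {w : List ℚ} (hw : w ≠ []) :
    deltaV w = w.headD 0 * diffProd w * w.getLastD 0 := by
  obtain ⟨x, w, rfl⟩ := List.exists_cons_of_ne_nil hw
  simp only [deltaV, diffProd, List.headD_cons, List.getLastD_cons, mul_right_comm]

theorem deltaV_eq_neg_diffProd {w : List ℚ} (hw : w ≠ []) :
    deltaV w = -diffProd (0 :: (w ++ [0])) := by
  rw [deltaV_eq_mul_diffProd hw]
  obtain ⟨x, w, rfl⟩ := List.exists_cons_of_ne_nil hw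
  rw [List.cons_append, diffProd_cons_cons, ← List.cons_append,
    diffProd_append hw (List.cons_ne_nil 0 [])]
  simp only [List.headD_cons, diffProd_singleton]
  ring

theorem diffProd_ne_zero {w : List ℚ} (hw : w.Nodup) : diffProd w ≠ 0 := by
  induction w with
  | nil => simp [diffProd]
  | cons x w ih =>
    cases w with
    | nil => simp [diffProd]
    | cons y w =>
      have := ih hw.of_cons
      simp_all [diffProd, sub_eq_zero]

theorem GoodV.headD_ne_zero {w : List ℚ} (hw : GoodV w) (h : w ≠ []) : w.headD 0 ≠ 0 := by
  obtain ⟨x, w, rfl⟩ := List.exists_cons_of_ne_nil h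
  exact fun h0 => hw.2 (by simp_all)

theorem GoodV.getLastD_ne_zero {w : List ℚ} (hw : GoodV w) (h : w ≠ []) : w.getLastD 0 ≠ 0 := by
  rw [List.getLastD_eq_getLast?, List.getLast?_eq_some_getLast h]
  exact fun h0 => hw.2 (h0 ▸ List.getLast_mem h)

theorem GoodV.deltaV_ne_zero {w : List ℚ} (hw : GoodV w) : deltaV w ≠ 0 := by
  rcases eq_or_ne w [] with rfl | h
  · simp [deltaV]
  · rw [deltaV_eq_mul_diffProd h]
    exact mul_ne_zero (mul_ne_zero (hw.headD_ne_zero h) (diffProd_ne_zero hw.1))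
      (hw.getLastD_ne_zero h)

/-- `Δ_v·A` is the polynomial-valued mould given by `p`, as an identity of rational functions. -/
def HasNumerator (p : (r : ℕ) → MvPolynomial (Fin r) ℚ) (A : Mould) : Prop :=
  ∀ w, GoodV w → deltaV w * A w = polyEval p w

theorem HasNumerator.apply_eq_div {p : (r : ℕ) → MvPolynomial (Fin r) ℚ} {A : Mould}
    (hA : HasNumerator p A) {w : List ℚ} (hw : GoodV w) : A w = polyEval p w / deltaV w := by
  rw [← hA w hw, mul_div_cancel_left₀ _ hw.deltaV_ne_zero]

/-! ### Cyclicity at zero -/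

/-- The identity `q(0,v₁,…,v_n) = q(v₁,…,v_n,0)` of polynomials, for every `n`. -/
def CyclicAtZero (q : (r : ℕ) → MvPolynomial (Fin r) ℚ) : Prop :=
  ∀ n, polyEval q (0 :: genericWord n) = polyEval q (genericWord n ++ [0])

theorem CyclicAtZero.polyEval_eq {q : (r : ℕ) → MvPolynomial (Fin r) ℚ} (hq : CyclicAtZero q)
    {S : Type*} [CommRing S] [Algebra ℚ S] (w : List S) :
    polyEval q (0 :: w) = polyEval q (w ++ [0]) := by
  simpa only [map_polyEval, List.map_cons, List.map_append, List.map_nil, map_zero,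
    map_genericWord rfl] using congrArg (evalWord w.length w) (hq w.length)

theorem continuous_polyEval_insert (q : (r : ℕ) → MvPolynomial (Fin r) ℚ) (a c : List ℚ) :
    Continuous fun t : ℚ => polyEval q (a ++ t :: c) := by
  have eq_aeval (t : ℚ) : polyEval q (a ++ t :: c) = Polynomial.aeval t
      (polyEval q (a.map Polynomial.C ++ Polynomial.X :: c.map Polynomial.C)) := by
    rw [map_polyEval]
    simp [Function.comp_def]
  simp only [eq_aeval]
  exact Polynomial.continuous_aeval _

theorem continuous_diffProd_insert (a c : List ℚ) :
    Continuous fun t : ℚ => diffProd (a ++ t :: c) := by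
  have left : Continuous fun t => diffProd (a ++ [t]) := by
    rcases eq_or_ne a [] with rfl | ha
    · simp only [List.nil_append, diffProd_singleton]
      exact continuous_const
    · simp only [diffProd_append ha (List.cons_ne_nil _ []), List.headD_cons]
      exact (continuous_const.mul (continuous_const.sub continuous_id)).mul continuous_const
  have right : Continuous fun t => diffProd (t :: c) := by
    cases c with
    | nil => exact continuous_const
    | cons y c =>
      simp only [diffProd_cons_cons]
      fun_prop
  simp only [diffProd_append_cons a _ c]
  exact left.mul right

section Residue

open Filter Topology

theorem eventually_good_insert {a c : List ℚ} (hac : GoodV (a ++ c)) :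
    ∀ᶠ t in 𝓝[≠] (0 : ℚ), GoodV (a ++ t :: c) := by
  have not_mem : ∀ᶠ t in 𝓝 (0 : ℚ), t ∉ a ++ c :=
    (List.finite_toSet (a ++ c)).isClosed.isOpen_compl.mem_nhds hac.2
  filter_upwards [not_mem.filter_mono nhdsWithin_le_nhds, self_mem_nhdsWithin] with t ht ht0
  have good_cons : GoodV (t :: (a ++ c)) :=
    ⟨List.nodup_cons.2 ⟨ht, hac.1⟩, mt List.mem_cons.1 (not_or.2 ⟨Ne.symm ht0, hac.2⟩)⟩
  exact good_cons.of_perm List.perm_middle.symm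

namespace HasNumerator

variable {q : (r : ℕ) → MvPolynomial (Fin r) ℚ} {B : Mould} {a c w : List ℚ}

theorem tendsto_mul_insert (hB : HasNumerator q B) (hac : GoodV (a ++ c)) {g n : ℚ → ℚ}
    (hg : Continuous g) (hg0 : g 0 ≠ 0) (hn : Continuous n)
    (h : ∀ t, t * g t = n t * deltaV (a ++ t :: c)) :
    Tendsto (fun t => t * B (a ++ t :: c)) (𝓝[≠] 0)
      (𝓝 (polyEval q (a ++ 0 :: c) * (n 0 / g 0))) := by
  have lim := (((continuous_polyEval_insert q a c).tendsto 0).mul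
    ((hn.tendsto 0).div (hg.tendsto 0) hg0)).mono_left (nhdsWithin_le_nhds (s := {0}ᶜ))
  refine lim.congr' ?_
  filter_upwards [eventually_good_insert hac,
    (hg.continuousAt.eventually_ne hg0).filter_mono nhdsWithin_le_nhds] with t ht hgt
  rw [Pi.div_apply, (div_eq_div_iff hgt ht.deltaV_ne_zero).2 (h t).symm, hB.apply_eq_div ht]
  ring

theorem tendsto_mul_cons (hB : HasNumerator q B) (hw : GoodV w) (hne : w ≠ []) :
    Tendsto (fun t => t * B (t :: w)) (𝓝[≠] 0) (𝓝 (-(polyEval q (0 :: w) / deltaV w))) := by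
  have at_zero : diffProd (0 :: (w ++ [0])) = -deltaV w := by
    rw [deltaV_eq_neg_diffProd hne, neg_neg]
  have lim := hB.tendsto_mul_insert (a := []) (c := w) hw
    (g := fun t => diffProd (t :: (w ++ [0]))) (n := fun _ => 1)
    (continuous_diffProd_insert [] (w ++ [0])) ?_ continuous_const fun t => ?_
  · simpa only [at_zero, one_div, inv_neg, mul_neg, ← div_eq_mul_inv,
      List.nil_append] using lim
  · exact at_zero ▸ neg_ne_zero.2 hw.deltaV_ne_zero
  · rw [deltaV_eq_neg_diffProd (by simp), List.nil_append, List.cons_append, diffProd_cons_cons]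
    ring

theorem tendsto_mul_append (hB : HasNumerator q B) (hw : GoodV w) (hne : w ≠ []) :
    Tendsto (fun t => t * B (w ++ [t])) (𝓝[≠] 0) (𝓝 (polyEval q (w ++ [0]) / deltaV w)) := by
  have at_zero := deltaV_eq_neg_diffProd hne
  have lim := hB.tendsto_mul_insert (a := w) (c := []) (by rwa [List.append_nil])
    (g := fun t => -diffProd (0 :: (w ++ [t]))) (n := fun _ => 1)
    (continuous_diffProd_insert (0 :: w) []).neg ?_ continuous_const fun t => ?_
  · simpa only [← at_zero, mul_one_div] using lim
  · exact at_zero ▸ hw.deltaV_ne_zero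
  · rw [deltaV_eq_neg_diffProd (by simp), List.append_assoc, List.singleton_append,
      show 0 :: (w ++ [t, 0]) = (0 :: w) ++ t :: [0] from rfl, diffProd_append_cons _ t [0],
      diffProd_cons_cons, diffProd_singleton, List.cons_append]
    ring

theorem tendsto_mul_insert_zero (hB : HasNumerator q B) (hac : GoodV (a ++ c)) (ha : a ≠ [])
    (hc : c ≠ []) : Tendsto (fun t => t * B (a ++ t :: c)) (𝓝[≠] 0) (𝓝 0) := by
  have delta_eq (t : ℚ) :
      deltaV (a ++ t :: c) = -(diffProd (0 :: (a ++ [t])) * diffProd (t :: (c ++ [0]))) := by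
    rw [deltaV_eq_neg_diffProd (by simp), List.append_assoc, List.cons_append, ← List.cons_append,
      diffProd_append_cons, List.cons_append]
  have delta_continuous : Continuous fun t => deltaV (a ++ t :: c) := by
    simp only [delta_eq]
    exact ((continuous_diffProd_insert (0 :: a) []).mul
      (continuous_diffProd_insert [] (c ++ [0]))).neg
  have delta_at_zero : deltaV (a ++ 0 :: c) = -(deltaV a * deltaV c) := by
    rw [delta_eq, deltaV_eq_neg_diffProd ha, deltaV_eq_neg_diffProd hc, neg_mul_neg]
  have lim := hB.tendsto_mul_insert hac delta_continuous ?_ continuous_id fun _ => rfl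
  · simpa using lim
  · rw [delta_at_zero]
    exact neg_ne_zero.2 (mul_ne_zero (hac.of_sublist (List.sublist_append_left a c)).deltaV_ne_zero
      (hac.of_sublist (List.sublist_append_right a c)).deltaV_ne_zero)

-- Of the terms `B(a t c)` of the shuffle sum, only those with `a` or `c` empty have a pole at
-- `t = 0`.
theorem polyEval_zero_cons (hB : HasNumerator q B)
    (halt : ∀ t, GoodV (t :: w) → shuffleSum B [t] w = 0) (hw : GoodV w) (hne : w ≠ []) :
    polyEval q (0 :: w) = polyEval q (w ++ [0]) := by
  have inner : Tendsto (fun t => ∑ i ∈ Finset.Ico 1 w.length, t * B (w.take i ++ t :: w.drop i))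
      (𝓝[≠] 0) (𝓝 (∑ _ ∈ Finset.Ico 1 w.length, 0)) :=
    tendsto_finsetSum _ fun _ hi => by
      have hi := Finset.mem_Ico.1 hi
      refine hB.tendsto_mul_insert_zero (by rwa [List.take_append_drop])
        (List.ne_nil_of_length_pos ?_) (List.ne_nil_of_length_pos ?_) <;> simp <;> omega
  have residue := ((hB.tendsto_mul_cons hw hne).add (hB.tendsto_mul_append hw hne)).add inner
  have vanishing : Tendsto (fun t => t * shuffleSum B [t] w) (𝓝[≠] 0) (𝓝 0) := by
    refine tendsto_const_nhds.congr' ?_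
    filter_upwards [eventually_good_insert (a := []) hw] with t ht
    rw [halt t ht, mul_zero]
  have residue_eq_zero := tendsto_nhds_unique (residue.congr fun t => ?_) vanishing
  · rw [Finset.sum_const_zero, add_zero, neg_add_eq_zero,
      div_left_inj' hw.deltaV_ne_zero] at residue_eq_zero
    exact residue_eq_zero
  · rw [shuffleSum_singleton_left, deconcSum_eq_add_sum_Ico _ hne, mul_add, mul_add,
      Finset.mul_sum, List.nil_append]

theorem cyclicAtZero (hB : HasNumerator q B)
    (halt : ∀ u v, u ≠ [] → v ≠ [] → GoodV (u ++ v) → shuffleSum B u v = 0) :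
    CyclicAtZero q := by
  rintro (_ | n)
  · rfl
  refine eq_of_forall_good_evalWord_eq fun w hw hgood => ?_
  have hne : w ≠ [] := List.ne_nil_of_length_eq_add_one hw
  simp only [map_polyEval, List.map_cons, List.map_append, List.map_nil, map_zero,
    map_genericWord hw]
  exact hB.polyEval_zero_cons (fun t => halt [t] w (List.cons_ne_nil t []) hne) hgood hne

end HasNumerator

end Residue

/-! ### Numerators of the terms of `arit` -/

section Excise

variable {S T : Type*} [CommRing S] [CommRing T]

theorem remove_eq_remove_succ {w : List S} {k l : ℕ} (hkl : k < l) (hl : l < w.length)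
    (h : letter w (k + 1) = letter w (l + 1)) : remove w k l = remove w (k + 1) (l + 1) := by
  rw [remove, remove, drop_eq_letter_cons hl, take_succ_eq_append_letter (hkl.trans hl), h,
    List.append_assoc, List.singleton_append]

theorem factorSub_eq_cons {w : List S} {k l : ℕ} (hkl : k < l) (hl : l ≤ w.length) (x : S) :
    factorSub w k l x = (letter w (k + 1) - x) :: factorSub w (k + 1) l x := by
  have : k < (w.take l).length := by rw [List.length_take]; omega
  rw [factorSub, drop_eq_letter_cons this, List.map_cons, factorSub]
  congr 2
  simp [letter_succ, List.getD_eq_getElem?_getD, hkl]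

theorem factorSub_succ_eq_append {w : List S} {k l : ℕ} (hkl : k ≤ l) (hl : l < w.length) (x : S) :
    factorSub w k (l + 1) x = factorSub w k l x ++ [letter w (l + 1) - x] := by
  rw [factorSub, take_succ_eq_append_letter hl, List.drop_append_of_le_length, List.map_append,
    factorSub, List.map_singleton]
  rw [List.length_take]
  omega

variable [Algebra ℚ S] [Algebra ℚ T]

/-- The numerator `p(a c)·q(b - x)` of the term of the factorization `w = a b c`, with
`b = (v_{k+1},…,v_l)`, in `arit(B)·A`, where `p` and `q` are the numerators of `A` and `B`. -/
noncomputable def excise (p q : (r : ℕ) → MvPolynomial (Fin r) ℚ) (w : List S) (k l : ℕ)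
    (x : S) : S :=
  polyEval p (remove w k l) * polyEval q (factorSub w k l x)

theorem map_letter (φ : S →ₐ[ℚ] T) (w : List S) (i : ℕ) :
    φ (letter w i) = letter (w.map φ) i := by
  have := List.getD_map (l := 0 :: w) (d := 0) (n := i) φ
  rw [letter, ← this, List.map_cons, map_zero, letter]

theorem map_excise (φ : S →ₐ[ℚ] T) (p q : (r : ℕ) → MvPolynomial (Fin r) ℚ) (w : List S)
    (k l : ℕ) (x : S) : φ (excise p q w k l x) = excise p q (w.map φ) k l (φ x) := by
  simp [excise, map_polyEval, remove, factorSub, Function.comp_def]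

end Excise

section Divisibility

universe u

variable {S : Type u} [CommRing S] [Algebra ℚ S]

theorem sub_dvd_sub_of_forall_algHom {a b P Q : S}
    (h : ∀ {T : Type u} [CommRing T] [Algebra ℚ T] (φ : S →ₐ[ℚ] T), φ a = φ b → φ P = φ Q) :
    a - b ∣ P - Q := by
  rw [← Ideal.mem_span_singleton, ← Ideal.Quotient.eq]
  refine h (Ideal.Quotient.mkₐ ℚ _) ?_
  exact Ideal.Quotient.eq.2 (Ideal.mem_span_singleton_self (a - b))

variable {p q : (r : ℕ) → MvPolynomial (Fin r) ℚ}

theorem sub_dvd_excise_sub_excise (w : List S) (k l : ℕ) (x y : S) :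
    x - y ∣ excise p q w k l x - excise p q w k l y :=
  sub_dvd_sub_of_forall_algHom fun φ h => by rw [map_excise, map_excise, h]

theorem CyclicAtZero.letter_sub_dvd_excise_sub (hq : CyclicAtZero q) {w : List S} {k l : ℕ}
    (hkl : k < l) (hl : l < w.length) :
    letter w (k + 1) - letter w (l + 1) ∣ excise p q w k l (letter w (l + 1)) -
      excise p q w (k + 1) (l + 1) (letter w (k + 1)) :=
  sub_dvd_sub_of_forall_algHom fun φ h => by
    have hl' : l < (w.map φ).length := by rwa [List.length_map]
    rw [map_letter, map_letter] at h
    rw [map_excise, map_excise, map_letter, map_letter, excise, excise,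
      remove_eq_remove_succ hkl hl' h, factorSub_eq_cons hkl hl'.le,
      factorSub_succ_eq_append hkl hl', h, sub_self, hq.polyEval_eq]

end Divisibility

/-! ### Polynomial functions of generic points -/

/-- The generic points of depth `r`. -/
abbrev GenericPoint (r : ℕ) : Type := {w : List ℚ // w.length = r ∧ GoodV w}

/-- The algebra of the functions of generic points that are given by a polynomial in the `r`
letters. -/
noncomputable def genericPolynomials (r : ℕ) : Subalgebra ℚ (GenericPoint r → ℚ) :=
  (AlgHom.pi fun w : GenericPoint r => evalWord r w.1).range

/-- The divided difference of the numerator `excise p q w k l x` at the letters `v_i` and `v_j`. -/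
noncomputable def dividedDifference (p q : (r : ℕ) → MvPolynomial (Fin r) ℚ) (w : List ℚ)
    (k l i j : ℕ) : ℚ :=
  (excise p q w k l (letter w i) - excise p q w k l (letter w j)) / (letter w i - letter w j)

/-- The quotient by `v_{k+1} - v_{l+1}` of the numerators of two terms of opposite flexions, those
removing `(v_{k+1},…,v_l)` and `(v_{k+2},…,v_{l+1})`, which agree when `v_{k+1} = v_{l+1}` and
`q` is cyclic at zero. -/
noncomputable def flexionDifference (p q : (r : ℕ) → MvPolynomial (Fin r) ℚ) (w : List ℚ)
    (k l : ℕ) : ℚ :=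
  (excise p q w k l (letter w (l + 1)) - excise p q w (k + 1) (l + 1) (letter w (k + 1))) /
    (letter w (k + 1) - letter w (l + 1))

theorem GoodV.letter_ne {w : List ℚ} (hw : GoodV w) {i j : ℕ} (hij : i < j)
    (hj : j ≤ w.length + 1) (h : 1 ≤ i ∨ j ≤ w.length) : letter w i ≠ letter w j := by
  have letter_ne_of_le {i j : ℕ} (hij : i ≠ j) (hi : i ≤ w.length) (hj : j ≤ w.length) :
      letter w i ≠ letter w j := by
    have nodup : (0 :: w).Nodup := List.nodup_cons.2 ⟨hw.2, hw.1⟩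
    rw [letter, letter, List.getD_eq_getElem _ _ (by simpa), List.getD_eq_getElem _ _ (by simpa),
      Ne, nodup.getElem_inj_iff]
    exact hij
  rcases Nat.lt_or_ge w.length j with hjw | hjw
  · obtain rfl : j = w.length + 1 := by omega
    rw [letter_length_succ, ← letter_zero w]
    exact letter_ne_of_le (by omega) (by omega) (Nat.zero_le _)
  · exact letter_ne_of_le hij.ne (by omega) hjw

section GenericPolynomials

variable {r : ℕ} {p q : (r : ℕ) → MvPolynomial (Fin r) ℚ}

theorem div_mem_genericPolynomials {P D : MvPolynomial (Fin r) ℚ} (hdvd : D ∣ P)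
    {f g : GenericPoint r → ℚ} (hf : ∀ w, evalWord r w.1 P = f w)
    (hg : ∀ w, evalWord r w.1 D = g w) (hg0 : ∀ w, g w ≠ 0) :
    (fun w => f w / g w) ∈ genericPolynomials r := by
  obtain ⟨Q, rfl⟩ := hdvd
  refine ⟨Q, funext fun w => ?_⟩
  rw [← hf, map_mul, hg, mul_div_cancel_left₀ _ (hg0 w)]
  rfl

theorem evalWord_letter {w : List ℚ} (hw : w.length = r) (i : ℕ) :
    evalWord r w (letter (genericWord r) i) = letter w i := by
  rw [map_letter, map_genericWord hw]

theorem evalWord_excise {w : List ℚ} (hw : w.length = r) (k l i : ℕ) :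
    evalWord r w (excise p q (genericWord r) k l (letter (genericWord r) i)) =
      excise p q w k l (letter w i) := by
  rw [map_excise, evalWord_letter hw, map_genericWord hw]

theorem dividedDifference_mem_genericPolynomials (k l : ℕ) {i j : ℕ} (hij : i < j)
    (hj : j ≤ r + 1) (h : 1 ≤ i ∨ j ≤ r) :
    (fun w : GenericPoint r => dividedDifference p q w.1 k l i j) ∈ genericPolynomials r := by
  refine div_mem_genericPolynomials (sub_dvd_excise_sub_excise (p := p) (q := q) (genericWord r)
    k l (letter (genericWord r) i) (letter (genericWord r) j)) (fun w => ?_) (fun w => ?_)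
    fun w => sub_ne_zero.2 (w.2.2.letter_ne hij (by have := w.2.1; omega) (by have := w.2.1; omega))
  · simp only [map_sub, evalWord_excise w.2.1]
  · simp only [map_sub, evalWord_letter w.2.1]

theorem flexionDifference_mem_genericPolynomials (hq : CyclicAtZero q) {k l : ℕ} (hkl : k < l)
    (hl : l < r) :
    (fun w : GenericPoint r => flexionDifference p q w.1 k l) ∈ genericPolynomials r := by
  refine div_mem_genericPolynomials (hq.letter_sub_dvd_excise_sub (p := p)
    (w := genericWord r) hkl (by rwa [length_genericWord])) (fun w => ?_) (fun w => ?_)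
    fun w => sub_ne_zero.2 (w.2.2.letter_ne (by omega) (by omega) (by omega))
  · simp only [map_sub, evalWord_excise w.2.1]
  · simp only [map_sub, evalWord_letter w.2.1]

end GenericPolynomials

/-! ### Partial fractions -/

theorem deltaV_append_append_mul {a b c : List ℚ} (hb : b ≠ []) (hac : a ++ c ≠ []) (x : ℚ) :
    deltaV (a ++ (b ++ c)) * (((0 :: a).getLastD 0 - (c ++ [0]).headD 0) *
        ((b.headD 0 - x) * (b.getLastD 0 - x))) =
      deltaV (a ++ c) * deltaV (b.map (· - x)) *
        (((0 :: a).getLastD 0 - b.headD 0) * (b.getLastD 0 - (c ++ [0]).headD 0)) := by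
  have head_sub : (b.map (· - x)).headD 0 = b.headD 0 - x := by
    obtain ⟨y, b, rfl⟩ := List.exists_cons_of_ne_nil hb
    rfl
  have last_sub : (b.map (· - x)).getLastD 0 = b.getLastD 0 - x := by
    simp [List.getLastD_eq_getLast?, List.getLast?_eq_some_getLast hb]
  have head_append : (b ++ (c ++ [0])).headD 0 = b.headD 0 := by
    obtain ⟨y, b, rfl⟩ := List.exists_cons_of_ne_nil hb
    rfl
  have ha0 : 0 :: a ≠ [] := List.cons_ne_nil 0 a
  have hc0 : c ++ [0] ≠ [] := List.append_ne_nil_of_right_ne_nil c (List.cons_ne_nil 0 [])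
  rw [deltaV_eq_neg_diffProd (by simp [hb]), deltaV_eq_neg_diffProd hac,
    deltaV_eq_mul_diffProd (by simpa), diffProd_map_sub, head_sub, last_sub,
    List.append_assoc, List.append_assoc, List.append_assoc, ← List.cons_append, ← List.cons_append,
    diffProd_append ha0 (List.append_ne_nil_of_left_ne_nil hb _), diffProd_append hb hc0,
    diffProd_append ha0 hc0, head_append]
  ring

section Factorization

variable {w : List ℚ} {k l : ℕ}

theorem getLastD_zero_cons_take (hk : k ≤ w.length) :
    (0 :: w.take k).getLastD 0 = letter w k := by
  rcases k with _ | k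
  · rfl
  · rw [take_succ_eq_append_letter hk, ← List.cons_append, List.getLastD_concat]

theorem headD_drop_append_zero (hl : l ≤ w.length) :
    (w.drop l ++ [0]).headD 0 = letter w (l + 1) := by
  rcases hl.lt_or_eq with hl | rfl
  · rw [drop_eq_letter_cons hl]
    rfl
  · rw [List.drop_length, letter_length_succ]
    rfl

theorem headD_drop_take (hkl : k < l) (hl : l ≤ w.length) :
    ((w.take l).drop k).headD 0 = letter w (k + 1) := by
  rw [drop_eq_letter_cons (by rw [List.length_take]; omega)]
  simp [letter_succ, List.getD_eq_getElem?_getD, hkl]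

theorem getLastD_drop_take (hkl : k < l) (hl : l ≤ w.length) :
    ((w.take l).drop k).getLastD 0 = letter w l := by
  obtain ⟨l, rfl⟩ := Nat.exists_eq_add_of_le' (show 1 ≤ l by omega)
  rw [take_succ_eq_append_letter hl, List.drop_append_of_le_length, List.getLastD_concat]
  rw [List.length_take]
  omega

theorem deltaV_mul_letter_sub (hkl : k < l) (hl : l ≤ w.length) (hproper : 1 ≤ k ∨ l < w.length)
    (x : ℚ) :
    deltaV w * ((letter w k - letter w (l + 1)) * ((letter w (k + 1) - x) * (letter w l - x))) =
      deltaV (remove w k l) * deltaV (factorSub w k l x) *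
        ((letter w k - letter w (k + 1)) * (letter w l - letter w (l + 1))) := by
  have key := deltaV_append_append_mul (a := w.take k) (b := (w.take l).drop k) (c := w.drop l)
    (List.ne_nil_of_length_pos (by simp; omega)) (List.ne_nil_of_length_pos (by simp; omega)) x
  have eq_append : w.take k ++ ((w.take l).drop k ++ w.drop l) = w := by
    nth_rw 1 [← List.append_assoc, ← min_eq_left hkl.le, ← List.take_take, List.take_append_drop,
      List.take_append_drop]
  rw [eq_append, getLastD_zero_cons_take (by omega), headD_drop_append_zero hl,
    headD_drop_take hkl hl, getLastD_drop_take hkl hl] at key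
  exact key

end Factorization

section Numerators

variable {A B : Mould} {p q : (r : ℕ) → MvPolynomial (Fin r) ℚ} {w : List ℚ} {k l : ℕ}

theorem deltaV_mul_remove_mul_factorSub (hA : HasNumerator p A) (hB : HasNumerator q B)
    (hw : GoodV w) (hkl : k < l) (hl : l ≤ w.length) (hproper : 1 ≤ k ∨ l < w.length) {j : ℕ}
    (hj : j ≤ k ∨ l < j) :
    deltaV w * (A (remove w k l) * B (factorSub w k l (letter w j))) *
      ((letter w k - letter w (l + 1)) *
        ((letter w (k + 1) - letter w j) * (letter w l - letter w j))) =
      excise p q w k l (letter w j) *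
        ((letter w k - letter w (k + 1)) * (letter w l - letter w (l + 1))) := by
  rw [excise, ← hA _ (hw.remove hkl.le), ← hB _ (hw.factorSub hj)]
  linear_combination A (remove w k l) * B (factorSub w k l (letter w j)) *
    deltaV_mul_letter_sub hkl hl hproper (letter w j)

theorem deltaV_mul_right_flexion (hA : HasNumerator p A) (hB : HasNumerator q B)
    (hw : GoodV w) (hkl : k < l) (hl : l ≤ w.length) (hproper : 1 ≤ k ∨ l < w.length) :
    deltaV w * (A (remove w k l) * B (factorSub w k l (letter w (l + 1)))) =
      excise p q w k l (letter w (l + 1)) / (letter w (k + 1) - letter w (l + 1)) -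
        excise p q w k l (letter w (l + 1)) / (letter w k - letter w (l + 1)) := by
  have key := deltaV_mul_remove_mul_factorSub hA hB hw hkl hl hproper (j := l + 1) (by omega)
  have h₁ := sub_ne_zero.2 (hw.letter_ne (i := k) (j := l + 1) (by omega) (by omega) (by omega))
  have h₂ := sub_ne_zero.2 (hw.letter_ne (i := k + 1) (j := l + 1) (by omega) (by omega) (by omega))
  have h₃ := sub_ne_zero.2 (hw.letter_ne (i := l) (j := l + 1) (by omega) (by omega) (by omega))
  refine mul_right_cancel₀ (mul_ne_zero h₁ (mul_ne_zero h₂ h₃)) (key.trans ?_)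
  field_simp
  ring

theorem deltaV_mul_left_flexion (hA : HasNumerator p A) (hB : HasNumerator q B)
    (hw : GoodV w) (hk : 1 ≤ k) (hkl : k < l) (hl : l ≤ w.length) :
    deltaV w * (A (remove w k l) * B (factorSub w k l (letter w k))) =
      excise p q w k l (letter w k) / (letter w k - letter w l) -
        excise p q w k l (letter w k) / (letter w k - letter w (l + 1)) := by
  have key := deltaV_mul_remove_mul_factorSub hA hB hw hkl hl (.inl hk) (j := k) (.inl le_rfl)
  have h₁ := sub_ne_zero.2 (hw.letter_ne (i := k) (j := l + 1) (by omega) (by omega) (by omega))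
  have h₂ := sub_ne_zero.2 (hw.letter_ne (i := k) (j := k + 1) (by omega) (by omega) (by omega))
  have h₃ := sub_ne_zero.2 (hw.letter_ne hkl (by omega) (by omega))
  have h₂' := sub_ne_zero.2 (sub_ne_zero.1 h₂).symm
  have h₃' := sub_ne_zero.2 (sub_ne_zero.1 h₃).symm
  refine mul_right_cancel₀ (mul_ne_zero h₁ (mul_ne_zero h₂' h₃')) (key.trans ?_)
  field_simp
  ring

end Numerators

/-! ### The pre-Lie product -/

theorem sum_triangle_shift {M : Type*} [AddCommMonoid M] (e : ℕ → ℕ → M) (r : ℕ) :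
    ∑ l ∈ Finset.range r, ∑ k ∈ Finset.range l, e (k + 1) (l + 1) +
        ∑ l ∈ Finset.Ico 1 r, e 0 l =
      ∑ l ∈ Finset.range r, ∑ k ∈ Finset.range l, e k l + ∑ k ∈ Finset.Ico 1 r, e k r := by
  induction r with
  | zero => simp
  | succ r ih =>
    rcases r.eq_zero_or_pos with rfl | hr
    · simp
    have shift : ∑ k ∈ Finset.range r, e (k + 1) (r + 1) =
        ∑ k ∈ Finset.Ico 1 (r + 1), e k (r + 1) := by
      rw [Finset.range_eq_Ico, Finset.sum_Ico_add' (fun k => e k (r + 1)) 0 r 1]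
    rw [Finset.sum_range_succ, Finset.sum_range_succ _ r, Finset.sum_Ico_succ_top hr, shift,
      add_add_add_comm, ih, Finset.sum_range_eq_add_Ico (fun k => e k r) hr]
    abel

/-- The product whose antisymmetrization is the bracket `ari`. -/
def preari (A B : Mould) : Mould := fun w => aritV B A w + muM A B w

theorem ariV_eq_preari_sub (A B : Mould) (w : List ℚ) :
    ariV A B w = preari A B w - preari B A w := by
  simp only [ariV, luM, preari]
  ring

theorem muM_eq_sum_Ico {A B : Mould} (hA0 : A [] = 0) (hB0 : B [] = 0) (w : List ℚ) :
    muM A B w = ∑ k ∈ Finset.Ico 1 w.length, A (w.take k) * B (w.drop k) := by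
  rcases eq_or_ne w [] with rfl | hw
  · simp [muM, hA0]
  · have := deconcSum_eq_add_sum_Ico (fun u v => A u * B v) hw
    rwa [hA0, hB0, zero_mul, mul_zero, zero_add, zero_add] at this

section Preari

variable (p q : (r : ℕ) → MvPolynomial (Fin r) ℚ)

/-- The polynomial part of `Δ_v·preari(A,B)`, in terms of the numerators `p` of `A` and `q`
of `B`. -/
noncomputable def regularPart (w : List ℚ) : ℚ :=
  ∑ l ∈ Finset.range w.length, ∑ k ∈ Finset.range l,
    (flexionDifference p q w k l + dividedDifference p q w (k + 1) (l + 1) (k + 1) (l + 2)) +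
  ∑ l ∈ Finset.Ico 1 w.length, dividedDifference p q w 0 l 0 (l + 1)

/-- The part of `Δ_v·preari(A,B)` that need not be a polynomial; it is symmetric in `A` and `B`. -/
noncomputable def singularPart (w : List ℚ) : ℚ :=
  ∑ k ∈ Finset.Ico 1 w.length,
    (polyEval p (w.take k) * polyEval q (w.drop k) +
      polyEval p (w.drop k) * polyEval q (w.take k)) / letter w (k + 1)

variable {p q}

theorem singularPart_comm (w : List ℚ) : singularPart p q w = singularPart q p w :=
  Finset.sum_congr rfl fun k _ => by ring

theorem regularPart_mem_genericPolynomials (hq : CyclicAtZero q) (r : ℕ) :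
    (fun w : GenericPoint r => regularPart p q w.1) ∈ genericPolynomials r := by
  have interior {l : ℕ} (hl : l ∈ Finset.range r) {k : ℕ} (hk : k ∈ Finset.range l) :
      (fun w : GenericPoint r => flexionDifference p q w.1 k l +
        dividedDifference p q w.1 (k + 1) (l + 1) (k + 1) (l + 2)) ∈ genericPolynomials r := by
    have hl := Finset.mem_range.1 hl
    have hk := Finset.mem_range.1 hk
    exact add_mem (flexionDifference_mem_genericPolynomials hq hk hl)
      (dividedDifference_mem_genericPolynomials _ _ (by omega) (by omega) (by omega))
  have boundary {l : ℕ} (hl : l ∈ Finset.Ico 1 r) :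
      (fun w : GenericPoint r => dividedDifference p q w.1 0 l 0 (l + 1)) ∈
        genericPolynomials r := by
    have hl := Finset.mem_Ico.1 hl
    exact dividedDifference_mem_genericPolynomials _ _ (by omega) (by omega) (by omega)
  convert add_mem (sum_mem fun l hl => sum_mem fun k hk => interior hl hk)
    (sum_mem fun l hl => boundary hl) using 1
  ext w
  simp only [regularPart, w.2.1, Pi.add_apply, Finset.sum_apply]

variable {A B : Mould} {w : List ℚ}

theorem deltaV_mul_muM (hA : HasNumerator p A) (hB : HasNumerator q B) (hA0 : A [] = 0)
    (hB0 : B [] = 0) (hw : GoodV w) :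
    deltaV w * muM A B w = ∑ k ∈ Finset.Ico 1 w.length,
      (polyEval p (w.take k) * polyEval q (w.drop k) / letter w (k + 1) -
        excise p q w k w.length 0 / letter w k) := by
  rw [muM_eq_sum_Ico hA0 hB0, Finset.mul_sum]
  refine Finset.sum_congr rfl fun k hk => ?_
  obtain ⟨hk, hkw⟩ := Finset.mem_Ico.1 hk
  have key := deltaV_mul_right_flexion hA hB hw hkw le_rfl (.inl hk)
  simpa [letter_length_succ, remove, factorSub, excise] using key

theorem deltaV_mul_aritV (hA : HasNumerator p A) (hB : HasNumerator q B) (hw : GoodV w) :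
    deltaV w * aritV B A w =
      ∑ l ∈ Finset.range w.length, ∑ k ∈ Finset.range l, (flexionDifference p q w k l +
        dividedDifference p q w (k + 1) (l + 1) (k + 1) (l + 2)) +
      ∑ k ∈ Finset.Ico 1 w.length, excise p q w k w.length 0 / letter w k +
      ∑ l ∈ Finset.Ico 1 w.length, excise p q w 0 l (letter w (l + 1)) / letter w (l + 1) := by
  let pole (k l : ℕ) := excise p q w k l (letter w (l + 1)) / (letter w k - letter w (l + 1))
  have term_eq {k l : ℕ} (hk : k < l) (hl : l < w.length) :
      deltaV w * (A (remove w k l) * B (factorSub w k l (letter w (l + 1))) -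
        A (remove w (k + 1) (l + 1)) * B (factorSub w (k + 1) (l + 1) (letter w (k + 1)))) =
      flexionDifference p q w k l + dividedDifference p q w (k + 1) (l + 1) (k + 1) (l + 2) +
        (pole (k + 1) (l + 1) - pole k l) := by
    rw [mul_sub, deltaV_mul_right_flexion hA hB hw hk hl.le (.inr hl),
      deltaV_mul_left_flexion hA hB hw (by omega) (by omega) hl]
    simp only [flexionDifference, dividedDifference, pole]
    ring
  have sum_eq := Finset.sum_congr (Eq.refl (Finset.range w.length)) fun l hl =>
    Finset.sum_congr (Eq.refl (Finset.range l)) fun k hk =>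
      term_eq (Finset.mem_range.1 hk) (Finset.mem_range.1 hl)
  have shift := sum_triangle_shift pole w.length
  simp only [Finset.sum_add_distrib, Finset.sum_sub_distrib, ← Finset.mul_sum] at sum_eq
  simp only [pole, letter_zero, letter_length_succ, sub_zero, zero_sub, div_neg,
    Finset.sum_neg_distrib] at sum_eq shift
  simp only [aritV_eq_sum, Finset.sum_add_distrib, Finset.sum_sub_distrib]
  linear_combination sum_eq + shift

theorem deltaV_mul_preari (hA : HasNumerator p A) (hB : HasNumerator q B) (hA0 : A [] = 0)
    (hB0 : B [] = 0) (hw : GoodV w) :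
    deltaV w * preari A B w = regularPart p q w + singularPart p q w := by
  rw [preari, mul_add, deltaV_mul_muM hA hB hA0 hB0 hw, deltaV_mul_aritV hA hB hw, regularPart,
    singularPart, add_assoc, add_assoc, add_assoc, add_right_inj]
  simp only [← Finset.sum_add_distrib]
  refine Finset.sum_congr rfl fun l _ => ?_
  have numerator_zero :
      excise p q w 0 l 0 = polyEval p (w.drop l) * polyEval q (w.take l) := by
    simp [excise, remove, factorSub]
  rw [dividedDifference, letter_zero, numerator_zero]
  ring

end Preari

theorem exists_hasNumerator_ariV {A B : Mould} {p q : (r : ℕ) → MvPolynomial (Fin r) ℚ}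
    (hA : HasNumerator p A) (hB : HasNumerator q B) (hA0 : A [] = 0) (hB0 : B [] = 0)
    (hp : CyclicAtZero p) (hq : CyclicAtZero q) : ∃ s, HasNumerator s (ariV A B) := by
  choose s hs using fun r => sub_mem (regularPart_mem_genericPolynomials (p := p) hq r)
    (regularPart_mem_genericPolynomials (p := q) hp r)
  refine ⟨s, fun w hw => ?_⟩
  rw [polyEval_eq_evalWord s rfl, ariV_eq_preari_sub, mul_sub, deltaV_mul_preari hA hB hA0 hB0 hw,
    deltaV_mul_preari hB hA hB0 hA0 hw, singularPart_comm, add_sub_add_right_eq_sub]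
  exact (congrFun (hs w.length) ⟨w, rfl, hw⟩).symm

/-- The space of alternal rational moulds M (in the v_i) such that Δ_v·M is polynomial-valued
in every depth is closed under the ari bracket. -/
theorem singular_bialternal_closed_under_ari (M N : Mould)
    (p q : (r : ℕ) → MvPolynomial (Fin r) ℚ)
    (hM0 : M [] = 0) (hN0 : N [] = 0)
    (hMrat : ∀ w : List ℚ, GoodV w → deltaV w * M w = evalP p w)
    (hNrat : ∀ w : List ℚ, GoodV w → deltaV w * N w = evalP q w)
    (hMal : ∀ w₁ w₂ : List ℚ, w₁ ≠ [] → w₂ ≠ [] → GoodV (w₁ ++ w₂) →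
      ((shuffles w₁ w₂).map M).sum = 0)
    (hNal : ∀ w₁ w₂ : List ℚ, w₁ ≠ [] → w₂ ≠ [] → GoodV (w₁ ++ w₂) →
      ((shuffles w₁ w₂).map N).sum = 0) :
    (∀ w₁ w₂ : List ℚ, w₁ ≠ [] → w₂ ≠ [] → GoodV (w₁ ++ w₂) →
      ((shuffles w₁ w₂).map (ariV M N)).sum = 0) ∧
    (∃ s : (r : ℕ) → MvPolynomial (Fin r) ℚ, ∀ w : List ℚ, GoodV w →
      deltaV w * ariV M N w = evalP s w) := by
  have hM : HasNumerator p M := hMrat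
  have hN : HasNumerator q N := hNrat
  constructor
  · intro u v hu hv huv
    have alternal := (alternal_genericPart hMal).ariV (alternal_genericPart hNal)
      ((genericPart_nil M).trans hM0) ((genericPart_nil N).trans hN0)
    exact (shuffleSum_congr_good (fun w hw => (ariV_genericPart M N hw).symm) huv).trans
      (alternal u v hu hv)
  · exact exists_hasNumerator_ariV hM hN hM0 hN0 (hM.cyclicAtZero hMal) (hN.cyclicAtZero hNal)
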